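/- arXiv:2309.16897 — 2 statements merged into one kernel-verified Lean document; each statement's English description precedes it below -/
import Mathlib

section
/- Let n ≥ 2 and let G be a connected finite simple graph on vertex set {1,…,n} with minimum degree d_min ≥ 1, and let λ be the second-smallest eigenvalue of the normalized Laplacian D_G^{−1/2} L_G D_G^{−1/2}. Let η ∈ (0,1/2) satisfy d_min·λ > (18/η)·log n, set δ = sqrt(18·log n/(η·d_min·λ)), and assume η(1+δ) < 1/2. Let H be the random spanning subgraph of G obtained by including each edge of G independently with probability η, and define b_{ij} = −1 for {i,j} ∈ E_H and b_{ij} = +1 for {i,j} ∈ E_G∖E_H. Then with probability at least 1 − 1/n² the following holds: for every real symmetric positive semidefinite n×n matrix X with all diagonal entries equal to 1, Σ_{{i,j}∈E_G} b_{ij} X_{ij} ≤ |E_G| − 2|E_H|, with equality if and only if X = 11ᵀ. In other words, with probability at least 1 − 1/n² the SDP relaxation of the noisy 2-XOR instance attains its maximum |E_G| − 2|E_H| uniquely at the rank-one matrix corresponding to the planted assignment. -/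
open Finset SimpleGraph Matrix
open scoped Classical

/-- The entry `X_{ij}` of a matrix at an unordered pair `{i,j}` (for symmetric matrices
this is just `X i j`; the symmetrization makes it well defined on `Sym2`). -/
noncomputable def entrySym {n : ℕ} (X : Matrix (Fin n) (Fin n) ℝ) : Sym2 (Fin n) → ℝ :=
  Sym2.lift ⟨fun i j => (X i j + X j i) / 2, fun i j => by ring⟩

section RankOneUpdates

lemma transpose_add_smul_vecMulVec {ι : Type*} {A : Matrix ι ι ℝ} (hA : Aᵀ = A) (v : ι → ℝ) (h : ℝ) :
    (A + h • vecMulVec v v)ᵀ = A + h • vecMulVec v v := by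
  rw [transpose_add, transpose_smul, transpose_vecMulVec, hA]

variable {ι : Type*} [Fintype ι]

/-- Chebyshev's association inequality for weights of total mass at most `R`. -/
lemma sum_mul_sum_le_of_monovary {w f g : ι → ℝ} {R : ℝ} (hw : ∀ i, 0 ≤ w i)
    (hR : ∑ i, w i ≤ R) (hf : ∀ i, 0 ≤ f i) (hg : ∀ i, 0 ≤ g i) (hfg : Monovary f g) :
    (∑ i, w i * f i) * (∑ i, w i * g i) ≤ R * ∑ i, w i * (f i * g i) := by
  have h0 : 0 ≤ ∑ i, ∑ j, w i * w j * ((f i - f j) * (g i - g j)) :=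
    Finset.sum_nonneg fun i _ => Finset.sum_nonneg fun j _ =>
      mul_nonneg (mul_nonneg (hw i) (hw j)) (by
        have := monovary_iff_forall_mul_nonneg.1 hfg j i
        exact this)
  have h1 : ∑ i, ∑ j, w i * w j * ((f i - f j) * (g i - g j)) =
      2 * ((∑ i, w i) * ∑ i, w i * (f i * g i)) -
        2 * ((∑ i, w i * f i) * (∑ i, w i * g i)) := by
    have e1 : (∑ i, w i) * ∑ i, w i * (f i * g i) = ∑ i, ∑ j, w i * (w j * (f j * g j)) :=
      Finset.sum_mul_sum _ _ _ _
    have e2 : (∑ i, w i) * ∑ i, w i * (f i * g i) = ∑ i, ∑ j, w i * (f i * g i) * w j := by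
      rw [mul_comm]; exact Finset.sum_mul_sum _ _ _ _
    have e3 : (∑ i, w i * f i) * (∑ i, w i * g i) = ∑ i, ∑ j, w i * f i * (w j * g j) :=
      Finset.sum_mul_sum _ _ _ _
    have e4 : (∑ i, w i * f i) * (∑ i, w i * g i) = ∑ i, ∑ j, w i * g i * (w j * f j) := by
      rw [mul_comm]; exact Finset.sum_mul_sum _ _ _ _
    rw [two_mul, two_mul]
    nth_rw 1 [e1, e3]
    rw [e2, e4]
    simp only [← Finset.sum_add_distrib, ← Finset.sum_sub_distrib]
    exact Finset.sum_congr rfl fun i _ => Finset.sum_congr rfl fun j _ => by ring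
  have h2 : (∑ i, w i) * ∑ i, w i * (f i * g i) ≤ R * ∑ i, w i * (f i * g i) :=
    mul_le_mul_of_nonneg_right hR
      (Finset.sum_nonneg fun i _ => mul_nonneg (hw i) (mul_nonneg (hf i) (hg i)))
  linarith

lemma dotProduct_rankOne_sandwich (M N : Matrix ι ι ℝ) (v : ι → ℝ) :
    v ⬝ᵥ ((M * vecMulVec v v * N) *ᵥ v) = (v ⬝ᵥ (M *ᵥ v)) * (v ⬝ᵥ (N *ᵥ v)) := by
  rw [← mulVec_mulVec, ← mulVec_mulVec, vecMulVec_mulVec]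
  simp [mulVec_smul, dotProduct_smul, mul_comm]

lemma trace_rankOne_sandwich (M N : Matrix ι ι ℝ) (v : ι → ℝ) :
    (M * vecMulVec v v * N).trace = v ⬝ᵥ ((N * M) *ᵥ v) := by
  rw [trace_mul_comm, ← mul_assoc, mul_vecMulVec, trace_vecMulVec, dotProduct_comm]

lemma posSemidef_add_smul_vecMulVec {A : Matrix ι ι ℝ} (hA : A.PosSemidef) (v : ι → ℝ) {h : ℝ}
    (hh : 0 ≤ h) : (A + h • vecMulVec v v).PosSemidef :=
  hA.add ((by simpa using posSemidef_vecMulVec_self_star v : (vecMulVec v v).PosSemidef).smul hh)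

variable [DecidableEq ι]

/-- Simultaneous diagonalization of the polynomials in a positive semidefinite matrix:
their traces and quadratic forms are sums over the eigenvalues. -/
lemma posSemidef_exists_spectral {A : Matrix ι ι ℝ} (hA : A.PosSemidef) :
    ∃ (l : ι → ℝ) (w : (ι → ℝ) → ι → ℝ), (∀ i, 0 ≤ l i) ∧ (∀ v i, 0 ≤ w v i) ∧
      (∀ v, ∑ i, w v i = v ⬝ᵥ v) ∧
      (∀ i, ∃ v, v ⬝ᵥ v = 1 ∧ v ⬝ᵥ (A *ᵥ v) = l i) ∧
      (∀ k, (A ^ k).trace = ∑ i, l i ^ k) ∧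
      ∀ v c j k, v ⬝ᵥ (((A + c • 1) ^ j * A ^ k) *ᵥ v) = ∑ i, w v i * ((l i + c) ^ j * l i ^ k) := by
  obtain ⟨U, hU⟩ : ∃ U : Matrix ι ι ℝ, U = hA.1.eigenvectorUnitary := ⟨_, rfl⟩
  have hUU : Uᵀ * U = 1 := by
    rw [hU]; exact Unitary.coe_star_mul_self hA.1.eigenvectorUnitary
  have hUU' : U * Uᵀ = 1 := by
    rw [hU]; exact Unitary.coe_mul_star_self hA.1.eigenvectorUnitary
  set l := hA.1.eigenvalues with hl
  have hsp : A = U * diagonal l * Uᵀ := by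
    have h := hA.1.spectral_theorem
    rw [Unitary.conjStarAlgAut_apply] at h
    rw [hU]
    exact h
  have hpow : ∀ (c : ℝ) (k : ℕ),
      (A + c • 1) ^ k = U * diagonal (fun i => (l i + c) ^ k) * Uᵀ := by
    intro c k
    have h1 : A + c • 1 = U * diagonal (fun i => l i + c) * Uᵀ := by
      have : (diagonal fun i => l i + c) = diagonal l + c • (1 : Matrix ι ι ℝ) := by
        rw [smul_one_eq_diagonal, diagonal_add]
      rw [this, mul_add, add_mul, ← hsp]
      simp [hUU']
    induction k with
    | zero => simp [hUU']
    | succ k ih =>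
      rw [pow_succ, ih]
      nth_rw 1 [h1]
      calc _ = U * diagonal (fun i => (l i + c) ^ k) * (Uᵀ * U) *
            diagonal (fun i => l i + c) * Uᵀ := by simp only [mul_assoc]
        _ = _ := by simp [hUU, mul_assoc, pow_succ]
  have hpow0 : ∀ k, A ^ k = U * diagonal (fun i => l i ^ k) * Uᵀ := by
    intro k
    simpa using hpow 0 k
  refine ⟨l, fun v i => (Uᵀ *ᵥ v) i ^ 2, fun i => hA.eigenvalues_nonneg i,
    fun v i => sq_nonneg _, fun v => ?_, fun i => ⟨U *ᵥ Pi.single i 1, ?_, ?_⟩, fun k => ?_,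
    fun v c j k => ?_⟩
  · have : (Uᵀ *ᵥ v) ⬝ᵥ (Uᵀ *ᵥ v) = v ⬝ᵥ v := by
      rw [dotProduct_mulVec, vecMul_transpose, mulVec_mulVec, hUU', one_mulVec]
    rw [← this]
    simp [dotProduct, sq]
  · rw [dotProduct_mulVec, ← mulVec_transpose, mulVec_mulVec, hUU]
    simp
  · rw [dotProduct_comm, dotProduct_mulVec, ← mulVec_transpose, mulVec_mulVec, mulVec_mulVec]
    have : Uᵀ * A * U = diagonal l := by
      rw [hsp]
      calc _ = (Uᵀ * U) * diagonal l * (Uᵀ * U) := by simp only [mul_assoc]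
        _ = _ := by simp [hUU]
    simp [this]
  · rw [hpow0, trace_mul_comm, ← mul_assoc, hUU, one_mul, trace_diagonal]
  · rw [hpow, hpow0]
    have : U * diagonal (fun i => (l i + c) ^ j) * Uᵀ * (U * diagonal (fun i => l i ^ k) * Uᵀ)
        = U * diagonal (fun i => (l i + c) ^ j * l i ^ k) * Uᵀ := by
      calc _ = U * diagonal (fun i => (l i + c) ^ j) * (Uᵀ * U) *
            diagonal (fun i => l i ^ k) * Uᵀ := by simp only [mul_assoc]
        _ = _ := by simp [hUU, mul_assoc]
    rw [this, ← mulVec_mulVec, ← mulVec_mulVec, dotProduct_mulVec, ← mulVec_transpose]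
    simp only [dotProduct, mulVec_diagonal]
    exact Finset.sum_congr rfl fun i _ => by ring

lemma moment_mul_moment_le {A : Matrix ι ι ℝ} (hA : A.PosSemidef) {v : ι → ℝ} {R c : ℝ}
    (hv : v ⬝ᵥ v ≤ R) (hc : 0 ≤ c) (j k : ℕ) :
    (v ⬝ᵥ ((A + c • 1) ^ j *ᵥ v)) * (v ⬝ᵥ (A ^ k *ᵥ v)) ≤
      R * (v ⬝ᵥ (((A + c • 1) ^ j * A ^ k) *ᵥ v)) := by
  obtain ⟨l, w, hl, hw, hsum, -, -, hq⟩ := posSemidef_exists_spectral hA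
  have h1 := hq v c j 0
  have h2 := hq v c 0 k
  simp only [pow_zero, mul_one, one_mul] at h1 h2
  rw [h1, h2, hq]
  refine sum_mul_sum_le_of_monovary (hw v) ((hsum v).trans_le hv)
    (fun i => pow_nonneg (add_nonneg (hl i) hc) _) (fun i => pow_nonneg (hl i) _) ?_
  intro a b hab
  have : l a ≤ l b := by
    by_contra h
    exact absurd hab (not_lt.2 (pow_le_pow_left₀ (hl b) (not_le.1 h).le _))
  exact pow_le_pow_left₀ (add_nonneg (hl a) hc) (by linarith) _

lemma moment_nonneg {A : Matrix ι ι ℝ} (hA : A.PosSemidef) (v : ι → ℝ) (k : ℕ) :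
    0 ≤ v ⬝ᵥ (A ^ k *ᵥ v) := by
  simpa using (hA.pow k).dotProduct_mulVec_nonneg v

lemma pow_succ_mul_pow_rankOne (A : Matrix ι ι ℝ) (v : ι → ℝ) (h : ℝ) (j k : ℕ) :
    (A + h • vecMulVec v v) ^ (j + 1) * A ^ k =
      (A + h • vecMulVec v v) ^ j * A ^ (k + 1) +
        h • ((A + h • vecMulVec v v) ^ j * vecMulVec v v * A ^ k) := by
  rw [pow_succ, mul_add, add_mul, pow_succ' A k]
  simp [mul_assoc]

lemma dotProduct_pow_mul_pow_comm {A B : Matrix ι ι ℝ} (hA : Aᵀ = A) (hB : Bᵀ = B)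
    (v : ι → ℝ) (j k : ℕ) :
    v ⬝ᵥ ((A ^ k * B ^ j) *ᵥ v) = v ⬝ᵥ ((B ^ j * A ^ k) *ᵥ v) := by
  have : (B ^ j * A ^ k)ᵀ = A ^ k * B ^ j := by
    rw [transpose_mul, transpose_pow, transpose_pow, hA, hB]
  rw [← this, mulVec_transpose, dotProduct_comm, dotProduct_mulVec]

lemma moment_shift_succ (A : Matrix ι ι ℝ) (v : ι → ℝ) (c : ℝ) (j k : ℕ) :
    v ⬝ᵥ (((A + c • 1) ^ (j + 1) * A ^ k) *ᵥ v) =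
      v ⬝ᵥ (((A + c • 1) ^ j * A ^ (k + 1)) *ᵥ v) +
        c * (v ⬝ᵥ (((A + c • 1) ^ j * A ^ k) *ᵥ v)) := by
  rw [pow_succ, mul_assoc, add_mul _ _ (A ^ k), ← pow_succ', mul_add, smul_one_mul,
    mul_smul_comm, add_mulVec, dotProduct_add, smul_mulVec, dotProduct_smul, smul_eq_mul]

lemma moment_rankOne_le {A : Matrix ι ι ℝ} (hA : A.PosSemidef) {v : ι → ℝ} {R h : ℝ}
    (hv : v ⬝ᵥ v ≤ R) (hR : 0 ≤ R) (hh : 0 ≤ h) (j : ℕ) : ∀ k,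
    v ⬝ᵥ (((A + h • vecMulVec v v) ^ j * A ^ k) *ᵥ v) ≤
      v ⬝ᵥ (((A + (h * R) • 1) ^ j * A ^ k) *ᵥ v) := by
  induction j with
  | zero => intro k; simp
  | succ j ih =>
    intro k
    rw [pow_succ_mul_pow_rankOne, add_mulVec, dotProduct_add, smul_mulVec, dotProduct_smul,
      dotProduct_rankOne_sandwich, smul_eq_mul, moment_shift_succ, mul_assoc h R]
    refine add_le_add (ih _) (mul_le_mul_of_nonneg_left ?_ hh)
    refine le_trans ?_ (moment_mul_moment_le hA hv (mul_nonneg hh hR) j k)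
    refine mul_le_mul_of_nonneg_right ?_ (moment_nonneg hA v k)
    simpa using ih 0

lemma trace_pow_rankOne_le {A : Matrix ι ι ℝ} (hA : A.PosSemidef) {v : ι → ℝ} {R h : ℝ}
    (hv : v ⬝ᵥ v ≤ R) (hR : 0 < R) (hh : 0 ≤ h) (j : ℕ) : ∀ k,
    ((A + h • vecMulVec v v) ^ j * A ^ k).trace ≤ (A ^ (j + k)).trace +
      (v ⬝ᵥ (((A + (h * R) • 1) ^ j * A ^ k) *ᵥ v) - v ⬝ᵥ (A ^ (j + k) *ᵥ v)) / R := by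
  have hAt : Aᵀ = A := by simpa using hA.1.eq
  induction j with
  | zero => intro k; simp
  | succ j ih =>
    intro k
    have h1 := ih (k + 1)
    have h2 := moment_rankOne_le hA hv hR.le hh j k
    rw [pow_succ_mul_pow_rankOne, trace_add, trace_smul, trace_rankOne_sandwich, smul_eq_mul,
      dotProduct_pow_mul_pow_comm hAt (transpose_add_smul_vecMulVec hAt v h)]
    rw [show j + 1 + k = j + (k + 1) by ring, moment_shift_succ]
    have h4 := mul_le_mul_of_nonneg_left h2 hh
    refine (add_le_add h1 h4).trans (le_of_eq ?_)
    field_simp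
    ring

lemma moment_le_moment_rankOne {A : Matrix ι ι ℝ} (hA : A.PosSemidef) {v : ι → ℝ} {h : ℝ}
    (hh : 0 ≤ h) (j : ℕ) : ∀ k,
    v ⬝ᵥ (A ^ (j + k) *ᵥ v) ≤ v ⬝ᵥ (((A + h • vecMulVec v v) ^ j * A ^ k) *ᵥ v) := by
  induction j with
  | zero => intro k; simp
  | succ j ih =>
    intro k
    rw [pow_succ_mul_pow_rankOne, add_mulVec, dotProduct_add, smul_mulVec, dotProduct_smul,
      dotProduct_rankOne_sandwich, smul_eq_mul, show j + 1 + k = j + (k + 1) by ring]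
    have h0 : 0 ≤ v ⬝ᵥ ((A + h • vecMulVec v v) ^ j *ᵥ v) :=
      (moment_nonneg hA v j).trans (by simpa using ih 0)
    have := mul_nonneg hh (mul_nonneg h0 (moment_nonneg hA v k))
    linarith [ih (k + 1)]

lemma le_trace_pow_rankOne {A : Matrix ι ι ℝ} (hA : A.PosSemidef) {v : ι → ℝ} {h : ℝ}
    (hh : 0 ≤ h) (j : ℕ) : ∀ k,
    (A ^ (j + k)).trace + h * (j * (v ⬝ᵥ (A ^ (j + k - 1) *ᵥ v))) ≤
      ((A + h • vecMulVec v v) ^ j * A ^ k).trace := by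
  have hAt : Aᵀ = A := by simpa using hA.1.eq
  induction j with
  | zero => intro k; simp
  | succ j ih =>
    intro k
    rw [pow_succ_mul_pow_rankOne, trace_add, trace_smul, trace_rankOne_sandwich, smul_eq_mul,
      dotProduct_pow_mul_pow_comm hAt (transpose_add_smul_vecMulVec hAt v h),
      show j + 1 + k = j + (k + 1) by ring]
    have h1 := ih (k + 1)
    have h2 := mul_le_mul_of_nonneg_left (moment_le_moment_rankOne hA hh (v := v) j k) hh
    simp only [show j + (k + 1) - 1 = j + k by omega] at h1 ⊢
    push_cast
    linarith

/-- The trace of the exponential of a matrix, as a power series. -/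
noncomputable def traceExp (A : Matrix ι ι ℝ) : ℝ :=
  ∑' k : ℕ, (A ^ k).trace / k.factorial

lemma Real.hasSum_pow_div_factorial (x : ℝ) :
    HasSum (fun k : ℕ => x ^ k / k.factorial) (Real.exp x) := by
  rw [Real.exp_eq_exp_ℝ]
  exact NormedSpace.expSeries_div_hasSum_exp x

lemma hasSum_traceExp {A : Matrix ι ι ℝ} (hA : A.PosSemidef) :
    HasSum (fun k : ℕ => (A ^ k).trace / k.factorial) (traceExp A) := by
  obtain ⟨l, w, -, -, -, -, htr, -⟩ := posSemidef_exists_spectral hA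
  refine Summable.hasSum ⟨∑ i, Real.exp (l i), ?_⟩
  simp only [htr, Finset.sum_div]
  exact hasSum_sum fun i _ => Real.hasSum_pow_div_factorial (l i)

lemma traceExp_nonneg {A : Matrix ι ι ℝ} (hA : A.PosSemidef) : 0 ≤ traceExp A :=
  tsum_nonneg fun k => div_nonneg (hA.pow k).trace_nonneg (Nat.cast_nonneg _)

lemma exists_hasSum_moment {A : Matrix ι ι ℝ} (hA : A.PosSemidef) (v : ι → ℝ) :
    ∃ m, 0 ≤ m ∧ ∀ c, HasSum (fun k : ℕ => (v ⬝ᵥ ((A + c • 1) ^ k *ᵥ v)) / k.factorial)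
      (Real.exp c * m) := by
  obtain ⟨l, w, -, hw, -, -, -, hq⟩ := posSemidef_exists_spectral hA
  refine ⟨∑ i, w v i * Real.exp (l i),
    Finset.sum_nonneg fun i _ => mul_nonneg (hw v i) (Real.exp_pos _).le, fun c => ?_⟩
  have h1 : ∀ k : ℕ, v ⬝ᵥ ((A + c • 1) ^ k *ᵥ v) = ∑ i, w v i * (l i + c) ^ k := by
    intro k
    simpa using hq v c k 0
  simp only [h1, Finset.sum_div, Finset.mul_sum]
  refine hasSum_sum fun i _ => ?_
  have := (Real.hasSum_pow_div_factorial (l i + c)).mul_left (w v i)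
  rw [Real.exp_add] at this
  convert! this using 1
  · ext k; ring
  · ring

/-- Replacing a Bernoulli multiple of a rank-one matrix by a deterministic multiple does not
decrease the expected trace exponential. -/
lemma traceExp_bernoulli_le {A : Matrix ι ι ℝ} (hA : A.PosSemidef) {v : ι → ℝ} {R h p : ℝ}
    (hv : v ⬝ᵥ v ≤ R) (hR : 0 < R) (hh : 0 ≤ h) (hp : 0 ≤ p) :
    (1 - p) * traceExp A + p * traceExp (A + h • vecMulVec v v) ≤
      traceExp (A + (p * ((Real.exp (h * R) - 1) / R)) • vecMulVec v v) := by
  obtain ⟨m, hm, hsum⟩ := exists_hasSum_moment hA v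
  have hκ : 0 ≤ p * ((Real.exp (h * R) - 1) / R) :=
    mul_nonneg hp (div_nonneg (by linarith [Real.add_one_le_exp (h * R), mul_nonneg hh hR.le])
      hR.le)
  have hm0 : HasSum (fun k : ℕ => (v ⬝ᵥ (A ^ k *ᵥ v)) / k.factorial) m := by
    simpa using hsum 0
  have hup : traceExp (A + h • vecMulVec v v) ≤
      traceExp A + (Real.exp (h * R) * m - m) / R := by
    refine hasSum_le (fun k => ?_) (hasSum_traceExp (posSemidef_add_smul_vecMulVec hA v hh))
      ((hasSum_traceExp hA).add (((hsum (h * R)).sub hm0).div_const R))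
    have := trace_pow_rankOne_le hA hv hR hh k 0
    simp only [pow_zero, mul_one, add_zero] at this
    refine (div_le_div_of_nonneg_right this (Nat.cast_nonneg k.factorial)).trans (le_of_eq ?_)
    ring
  have hlow : ∀ c, 0 ≤ c → traceExp A + c * m ≤ traceExp (A + c • vecMulVec v v) := by
    intro c hc
    have hshift : HasSum (fun k : ℕ => (k * (v ⬝ᵥ (A ^ (k - 1) *ᵥ v))) / k.factorial) m := by
      rw [← hasSum_nat_add_iff' 1]
      simp only [Finset.sum_range_one, Nat.cast_zero, zero_mul, zero_div, sub_zero]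
      refine hm0.congr_fun fun k => ?_
      rw [Nat.factorial_succ, Nat.add_sub_cancel]
      push_cast
      field_simp
    refine hasSum_le (fun k => ?_) ((hasSum_traceExp hA).add (hshift.mul_left c))
      (hasSum_traceExp (posSemidef_add_smul_vecMulVec hA v hc))
    have := le_trace_pow_rankOne hA hc (v := v) k 0
    simp only [pow_zero, mul_one, add_zero] at this
    refine le_trans (le_of_eq ?_) (div_le_div_of_nonneg_right this (Nat.cast_nonneg k.factorial))
    ring
  refine le_trans ?_ (hlow _ hκ)
  have := mul_le_mul_of_nonneg_left hup hp
  have e : p * ((Real.exp (h * R) - 1) / R) * m = p * ((Real.exp (h * R) * m - m) / R) := by ring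
  rw [e]
  linarith

lemma traceExp_le_of_quadForm_le {A : Matrix ι ι ℝ} (hA : A.PosSemidef) {c : ℝ}
    (h : ∀ v, v ⬝ᵥ (A *ᵥ v) ≤ c * (v ⬝ᵥ v)) : traceExp A ≤ Fintype.card ι * Real.exp c := by
  obtain ⟨l, w, -, -, -, heig, htr, -⟩ := posSemidef_exists_spectral hA
  have hs : HasSum (fun k : ℕ => (A ^ k).trace / k.factorial) (∑ i, Real.exp (l i)) := by
    simp only [htr, Finset.sum_div]
    exact hasSum_sum fun i _ => Real.hasSum_pow_div_factorial (l i)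
  rw [(hasSum_traceExp hA).unique hs]
  calc ∑ i, Real.exp (l i) ≤ ∑ _i : ι, Real.exp c := by
        refine Finset.sum_le_sum fun i _ => Real.exp_le_exp.2 ?_
        obtain ⟨v, hv, hv'⟩ := heig i
        have := h v
        rwa [hv', hv, mul_one] at this
    _ = _ := by simp

lemma exp_le_traceExp {A : Matrix ι ι ℝ} (hA : A.PosSemidef) {c : ℝ} {v : ι → ℝ} (hv : v ≠ 0)
    (h : c * (v ⬝ᵥ v) ≤ v ⬝ᵥ (A *ᵥ v)) : Real.exp c ≤ traceExp A := by
  obtain ⟨l, w, -, hw, hsum, -, htr, hq⟩ := posSemidef_exists_spectral hA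
  have hs : HasSum (fun k : ℕ => (A ^ k).trace / k.factorial) (∑ i, Real.exp (l i)) := by
    simp only [htr, Finset.sum_div]
    exact hasSum_sum fun i _ => Real.hasSum_pow_div_factorial (l i)
  rw [(hasSum_traceExp hA).unique hs]
  obtain ⟨i, hi⟩ : ∃ i, c ≤ l i := by
    by_contra! hlt
    have h1 : v ⬝ᵥ (A *ᵥ v) = ∑ i, w v i * l i := by simpa using hq v 0 0 1
    rw [h1, ← hsum, Finset.mul_sum] at h
    have hpos : 0 < ∑ i, w v i := by
      rw [hsum]
      exact (dotProduct_self_star_pos_iff (v := v)).2 hv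
    obtain ⟨i, -, hi⟩ := Finset.exists_lt_of_sum_lt (by simpa using hpos :
      ∑ i : ι, (0 : ℝ) < ∑ i, w v i)
    refine absurd h (not_le.2 (Finset.sum_lt_sum (fun i _ => ?_) ⟨i, Finset.mem_univ _, ?_⟩))
    · nlinarith [hw v i, hlt i]
    · nlinarith [hlt i]
  exact (Real.exp_le_exp.2 hi).trans
    (Finset.single_le_sum (f := fun i => Real.exp (l i)) (fun i _ => (Real.exp_pos _).le)
      (Finset.mem_univ i))

end RankOneUpdates

section MatrixChernoff

variable {ι κ : Type*} [Fintype ι]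

lemma posSemidef_add_sum_smul_vecMulVec {A : Matrix ι ι ℝ} (hA : A.PosSemidef) (v : κ → ι → ℝ)
    {h : ℝ} (hh : 0 ≤ h) (s : Finset κ) :
    (A + ∑ e ∈ s, h • vecMulVec (v e) (v e)).PosSemidef := by
  induction s using Finset.induction_on with
  | empty => simpa using hA
  | insert a s ha ih =>
    rw [Finset.sum_insert ha, add_comm (h • _), ← add_assoc]
    exact posSemidef_add_smul_vecMulVec ih (v a) hh

lemma dotProduct_sum_smul_vecMulVec (v : κ → ι → ℝ) (h : ℝ) (s : Finset κ) (z : ι → ℝ) :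
    z ⬝ᵥ ((0 + ∑ e ∈ s, h • vecMulVec (v e) (v e)) *ᵥ z) = h * ∑ e ∈ s, (v e ⬝ᵥ z) ^ 2 := by
  rw [zero_add, sum_mulVec, dotProduct_sum, Finset.mul_sum]
  refine Finset.sum_congr rfl fun e _ => ?_
  rw [smul_mulVec, vecMulVec_mulVec]
  simp [dotProduct_comm z, sq]

variable [DecidableEq ι] [DecidableEq κ]

lemma sum_powerset_traceExp_le (v : κ → ι → ℝ) {R h p : ℝ} (hv : ∀ e, v e ⬝ᵥ v e ≤ R)
    (hR : 0 < R) (hh : 0 ≤ h) (hp : 0 ≤ p) (hp1 : p ≤ 1) (s : Finset κ) :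
    ∀ A : Matrix ι ι ℝ, A.PosSemidef →
    ∑ t ∈ s.powerset, (∏ e ∈ s, if e ∈ t then p else 1 - p) *
        traceExp (A + ∑ e ∈ t, h • vecMulVec (v e) (v e)) ≤
      traceExp (A + ∑ e ∈ s, (p * ((Real.exp (h * R) - 1) / R)) • vecMulVec (v e) (v e)) := by
  have hκ : 0 ≤ p * ((Real.exp (h * R) - 1) / R) :=
    mul_nonneg hp (div_nonneg (by linarith [Real.add_one_le_exp (h * R), mul_nonneg hh hR.le])
      hR.le)
  induction s using Finset.induction_on with
  | empty => intro A _; simp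
  | insert a s ha ih =>
    intro A hA
    rw [Finset.sum_powerset_insert ha, Finset.sum_insert ha, ← add_assoc,
      ← Finset.sum_add_distrib]
    refine le_trans (Finset.sum_le_sum fun t ht => ?_)
      (ih _ (posSemidef_add_smul_vecMulVec hA (v a) hκ))
    have hat : a ∉ t := fun h => ha (Finset.mem_powerset.1 ht h)
    have hw : (∏ e ∈ s, if e ∈ insert a t then p else 1 - p) =
        ∏ e ∈ s, if e ∈ t then p else 1 - p := by
      refine Finset.prod_congr rfl fun e he => ?_
      have : e ≠ a := fun h => ha (h ▸ he)
      simp [this]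
    rw [Finset.prod_insert ha, Finset.prod_insert ha, hw, if_neg hat,
      if_pos (Finset.mem_insert_self a t), Finset.sum_insert hat]
    have hw0 : 0 ≤ ∏ e ∈ s, (if e ∈ t then p else 1 - p) :=
      Finset.prod_nonneg fun e _ => by split_ifs <;> linarith
    have hstep := mul_le_mul_of_nonneg_left
      (traceExp_bernoulli_le (posSemidef_add_sum_smul_vecMulVec hA v hh t) (hv a) hR hh hp) hw0
    rw [add_right_comm A, add_left_comm A, add_comm (h • _)]
    refine le_trans (le_of_eq ?_) hstep
    ring

lemma sum_bool_eq_sum_powerset {κ : Type*} [Fintype κ] [DecidableEq κ] (F : Finset κ → ℝ) :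
    ∑ f : κ → Bool, F {e | f e = true} = ∑ t ∈ (univ : Finset κ).powerset, F t := by
  refine Finset.sum_nbij' (fun f => univ.filter fun e => f e = true) (fun t e => decide (e ∈ t)) ?_ ?_ ?_ ?_ ?_
  all_goals simp

lemma chernoff_exponent_le {δ : ℝ} (h0 : 0 ≤ δ) (h1 : δ ≤ 1) :
    δ - (1 + δ) * Real.log (1 + δ) ≤ -(δ ^ 2 / 3) := by
  have h := mul_le_mul_of_nonneg_left (Real.le_log_one_add_of_nonneg h0) (by linarith : 0 ≤ 1 + δ)
  have h2 : δ ^ 2 / 3 ≤ δ ^ 2 / (δ + 2) :=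
    div_le_div_of_nonneg_left (sq_nonneg δ) (by linarith) (by linarith)
  have h3 : (1 + δ) * (2 * δ / (δ + 2)) = δ + δ ^ 2 / (δ + 2) := by
    field_simp
    ring
  linarith

/-- **Matrix Chernoff bound** for Bernoulli sums of rank-one matrices: the probability that
`∑ ξₑ vₑ vₑᵀ` has an eigenvalue at least `(1 + δ) p`, when `∑ vₑ vₑᵀ ≤ 1` and `‖vₑ‖² ≤ R`. -/
lemma matrix_chernoff_bernoulli_rankOne [Fintype κ] (v : κ → ι → ℝ) {R p δ : ℝ}
    (hv : ∀ e, v e ⬝ᵥ v e ≤ R) (hR : 0 < R) (hp : 0 ≤ p) (hp1 : p ≤ 1) (h0 : 0 ≤ δ) (h1 : δ ≤ 1)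
    (hle : ∀ z, ∑ e, (v e ⬝ᵥ z) ^ 2 ≤ z ⬝ᵥ z) :
    ∑ f : κ → Bool, (if ∃ z : ι → ℝ, z ≠ 0 ∧
        p * (1 + δ) * (z ⬝ᵥ z) ≤ ∑ e with f e = true, (v e ⬝ᵥ z) ^ 2
      then ∏ e, (if f e then p else 1 - p) else 0) ≤
      Fintype.card ι * Real.exp (-(p * δ ^ 2 / (3 * R))) := by
  set h : ℝ := Real.log (1 + δ) / R with hh
  have hh0 : 0 ≤ h := div_nonneg (Real.log_nonneg (by linarith)) hR.le
  have hhR : Real.exp (h * R) = 1 + δ := by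
    rw [hh, div_mul_cancel₀ _ hR.ne', Real.exp_log (by linarith)]
  have hPSD0 : (0 : Matrix ι ι ℝ).PosSemidef := Matrix.PosSemidef.zero
  have hmain := sum_powerset_traceExp_le v hv hR hh0 hp hp1 univ 0 hPSD0
  rw [hhR, show p * ((1 + δ - 1) / R) = p * δ / R by ring] at hmain
  have hκ : 0 ≤ p * δ / R := div_nonneg (mul_nonneg hp h0) hR.le
  have hup := traceExp_le_of_quadForm_le (posSemidef_add_sum_smul_vecMulVec hPSD0 v hκ univ)
    (c := p * δ / R) fun z => by
      rw [dotProduct_sum_smul_vecMulVec]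
      exact mul_le_mul_of_nonneg_left (hle z) hκ
  have hmarkov : Real.exp (h * (p * (1 + δ))) * ∑ f : κ → Bool, (if ∃ z : ι → ℝ, z ≠ 0 ∧
        p * (1 + δ) * (z ⬝ᵥ z) ≤ ∑ e with f e = true, (v e ⬝ᵥ z) ^ 2
      then ∏ e, (if f e then p else 1 - p) else 0) ≤
      ∑ t ∈ (univ : Finset κ).powerset, (∏ e, if e ∈ t then p else 1 - p) *
        traceExp (0 + ∑ e ∈ t, h • vecMulVec (v e) (v e)) := by
    rw [← sum_bool_eq_sum_powerset, Finset.mul_sum]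
    refine Finset.sum_le_sum fun f _ => ?_
    have hw0 : 0 ≤ ∏ e, (if f e then p else 1 - p) :=
      Finset.prod_nonneg fun e _ => by split_ifs <;> linarith
    have hT := posSemidef_add_sum_smul_vecMulVec hPSD0 v hh0 {e | f e = true}
    simp only [Finset.mem_filter, Finset.mem_univ, true_and]
    split_ifs with hbad
    · obtain ⟨z, hz, hz'⟩ := hbad
      rw [mul_comm]
      refine mul_le_mul_of_nonneg_left (exp_le_traceExp hT hz ?_) hw0
      rw [dotProduct_sum_smul_vecMulVec, mul_assoc]
      exact mul_le_mul_of_nonneg_left hz' hh0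
    · rw [mul_zero]
      exact mul_nonneg hw0 (traceExp_nonneg hT)
  have hfin := hmarkov.trans (hmain.trans hup)
  rw [← le_div_iff₀' (Real.exp_pos _), mul_div_assoc, ← Real.exp_sub] at hfin
  refine hfin.trans (mul_le_mul_of_nonneg_left (Real.exp_le_exp.2 ?_) (Nat.cast_nonneg _))
  have := mul_le_mul_of_nonneg_left (chernoff_exponent_le h0 h1) (div_nonneg hp hR.le)
  calc p * δ / R - h * (p * (1 + δ)) = p / R * (δ - (1 + δ) * Real.log (1 + δ)) := by
        rw [hh]; ring
    _ ≤ p / R * -(δ ^ 2 / 3) := this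
    _ = -(p * δ ^ 2 / (3 * R)) := by field_simp

end MatrixChernoff

section Laplacian

variable {n : ℕ}

/-- The signed indicator vector of the endpoints of an edge, with an arbitrary orientation. -/
noncomputable def edgeVec (e : Sym2 (Fin n)) : Fin n → ℝ :=
  Pi.single (Quot.out e).1 1 - Pi.single (Quot.out e).2 1

lemma edgeVec_dotProduct (e : Sym2 (Fin n)) (x : Fin n → ℝ) :
    edgeVec e ⬝ᵥ x = x (Quot.out e).1 - x (Quot.out e).2 := by
  simp [edgeVec, sub_dotProduct]

lemma sym2_mk_out (e : Sym2 (Fin n)) : s((Quot.out e).1, (Quot.out e).2) = e :=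
  Quot.out_eq e

lemma edgeVec_dotProduct_sq (i j : Fin n) (x : Fin n → ℝ) :
    (edgeVec s(i, j) ⬝ᵥ x) ^ 2 = (x i - x j) ^ 2 := by
  rw [edgeVec_dotProduct]
  rcases Sym2.eq_iff.1 (sym2_mk_out s(i, j)) with ⟨h1, h2⟩ | ⟨h1, h2⟩
  · rw [h1, h2]
  · rw [h1, h2]; ring

lemma sum_adj_eq_two_mul_sum_edgeFinset (G : SimpleGraph (Fin n)) [DecidableRel G.Adj]
    (g : Sym2 (Fin n) → ℝ) :
    ∑ i, ∑ j, (if G.Adj i j then g s(i, j) else 0) = 2 * ∑ e ∈ G.edgeFinset, g e := by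
  rw [← Finset.sum_product' univ univ (fun i j => if G.Adj i j then g s(i, j) else 0),
    ← Finset.sum_filter, Finset.mul_sum,
    ← Finset.sum_fiberwise_of_maps_to (g := fun q : Fin n × Fin n => s(q.1, q.2))
      (t := G.edgeFinset) (by simp)]
  refine Finset.sum_congr rfl fun e he => ?_
  induction e with
  | _ a b =>
    have hab : G.Adj a b := by simpa using he
    have : ((univ ×ˢ univ : Finset (Fin n × Fin n)).filter fun q => G.Adj q.1 q.2).filter
        (fun q => s(q.1, q.2) = s(a, b)) = {(a, b), (b, a)} := by
      ext ⟨c, d⟩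
      simp only [Finset.mem_filter, Finset.mem_insert, Finset.mem_singleton, Sym2.eq_iff,
        Prod.mk.injEq, Finset.mem_product, Finset.mem_univ, true_and]
      constructor
      · exact fun h => h.2
      · rintro (⟨rfl, rfl⟩ | ⟨rfl, rfl⟩)
        · simp [hab]
        · simp [hab.symm]
    rw [this, Finset.sum_pair (by simp [hab.ne]), Sym2.eq_swap (a := b)]
    ring

lemma lapMatrix_quadForm (G : SimpleGraph (Fin n)) [DecidableRel G.Adj] (x : Fin n → ℝ) :
    x ⬝ᵥ (G.lapMatrix ℝ *ᵥ x) = ∑ e ∈ G.edgeFinset, (edgeVec e ⬝ᵥ x) ^ 2 := by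
  rw [← toLinearMap₂'_apply', lapMatrix_toLinearMap₂',
    div_eq_iff two_ne_zero, mul_comm, ← sum_adj_eq_two_mul_sum_edgeFinset]
  simp only [edgeVec_dotProduct_sq]

/-- The Poincaré inequality given by the spectral gap of the normalized Laplacian. -/
lemma normalizedLaplacian_poincare (G : SimpleGraph (Fin n)) [DecidableRel G.Adj] {lam : ℝ}
    (hdeg : ∀ i, 1 ≤ G.degree i) (hn : 0 < n)
    (hlam : lam ∈ lowerBounds {r : ℝ | ∃ z : Fin n → ℝ,
        (∑ i, z i * Real.sqrt (G.degree i)) = 0 ∧ (∑ i, (z i) ^ 2) = 1 ∧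
        r = z ⬝ᵥ ((Matrix.of fun i j =>
          (G.lapMatrix ℝ) i j / (Real.sqrt (G.degree i) * Real.sqrt (G.degree j))) *ᵥ z)})
    (y : Fin n → ℝ) :
    ∃ c, lam * ∑ i, G.degree i * (y i - c) ^ 2 ≤ y ⬝ᵥ (G.lapMatrix ℝ *ᵥ y) := by
  have hd : ∀ i, (0 : ℝ) < G.degree i := fun i => by exact_mod_cast hdeg i
  have hs : ∀ i, 0 < Real.sqrt (G.degree i) := fun i => Real.sqrt_pos.2 (hd i)
  have hD : 0 < ∑ i, (G.degree i : ℝ) :=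
    Finset.sum_pos (fun i _ => hd i) ⟨⟨0, hn⟩, Finset.mem_univ _⟩
  obtain ⟨c, hc⟩ : ∃ c : ℝ, ∑ i, G.degree i * (y i - c) = 0 := by
    refine ⟨(∑ i, G.degree i * y i) / ∑ i, (G.degree i : ℝ), ?_⟩
    simp only [mul_sub, Finset.sum_sub_distrib, ← Finset.sum_mul]
    field_simp
    ring
  refine ⟨c, ?_⟩
  set S := ∑ i, G.degree i * (y i - c) ^ 2 with hS
  have hS0 : 0 ≤ S := Finset.sum_nonneg fun i _ => mul_nonneg (hd i).le (sq_nonneg _)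
  have hquad : ∀ r : ℝ, (fun i => r * (Real.sqrt (G.degree i) * (y i - c))) ⬝ᵥ
      ((Matrix.of fun i j => (G.lapMatrix ℝ) i j /
        (Real.sqrt (G.degree i) * Real.sqrt (G.degree j))) *ᵥ
        fun i => r * (Real.sqrt (G.degree i) * (y i - c))) =
      r ^ 2 * (y ⬝ᵥ (G.lapMatrix ℝ *ᵥ y)) := by
    intro r
    have hshift : y ⬝ᵥ (G.lapMatrix ℝ *ᵥ y) =
        (fun i => y i - c) ⬝ᵥ (G.lapMatrix ℝ *ᵥ fun i => y i - c) := by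
      rw [lapMatrix_quadForm, lapMatrix_quadForm]
      simp [edgeVec_dotProduct]
    rw [hshift]
    simp only [dotProduct, mulVec, Matrix.of_apply, Finset.mul_sum]
    refine Finset.sum_congr rfl fun i _ => Finset.sum_congr rfl fun j _ => ?_
    have h1 := (hs i).ne'
    have h2 := (hs j).ne'
    field_simp
  rcases hS0.eq_or_lt with h0 | hpos
  · rw [← h0, mul_zero, lapMatrix_quadForm]
    positivity
  · have hr : (Real.sqrt S)⁻¹ ^ 2 = S⁻¹ := by rw [inv_pow, Real.sq_sqrt hS0]
    have := hlam ⟨fun i => (Real.sqrt S)⁻¹ * (Real.sqrt (G.degree i) * (y i - c)), ?_, ?_, rfl⟩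
    · rw [hquad, hr, inv_mul_eq_div, le_div_iff₀ hpos] at this
      exact this
    · rw [← mul_zero (Real.sqrt S)⁻¹, ← hc, Finset.mul_sum]
      refine Finset.sum_congr rfl fun i _ => ?_
      linear_combination (Real.sqrt S)⁻¹ * (y i - c) * Real.mul_self_sqrt (hd i).le
    · rw [← inv_mul_cancel₀ hpos.ne', ← hr, hS, Finset.mul_sum]
      refine Finset.sum_congr rfl fun i _ => ?_
      rw [mul_pow, mul_pow, Real.sq_sqrt (hd i).le]

/-- The effective resistance of an edge is at most `2 / (d λ)`. -/
lemma effectiveResistance_le (G : SimpleGraph (Fin n)) [DecidableRel G.Adj] {lam d : ℝ}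
    (hlam : 0 < lam) (hd : 0 < d) (hdeg : ∀ i, d ≤ G.degree i)
    (hpoin : ∀ y : Fin n → ℝ, ∃ c, lam * ∑ i, G.degree i * (y i - c) ^ 2 ≤
      y ⬝ᵥ (G.lapMatrix ℝ *ᵥ y))
    {e : Sym2 (Fin n)} (he : e ∈ G.edgeFinset) {y : Fin n → ℝ}
    (hy : G.lapMatrix ℝ *ᵥ y = edgeVec e) : edgeVec e ⬝ᵥ y ≤ 2 / (d * lam) := by
  obtain ⟨c, hc⟩ := hpoin y
  rw [hy, dotProduct_comm] at hc
  rw [edgeVec_dotProduct] at *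
  set i := (Quot.out e).1
  set j := (Quot.out e).2
  have hadj : G.Adj i j := by
    rw [← SimpleGraph.mem_edgeSet, ← SimpleGraph.mem_edgeFinset]
    rwa [sym2_mk_out e]
  have h1 : d * ((y i - c) ^ 2 + (y j - c) ^ 2) ≤ ∑ k, G.degree k * (y k - c) ^ 2 := by
    calc d * ((y i - c) ^ 2 + (y j - c) ^ 2) = ∑ k ∈ {i, j}, d * (y k - c) ^ 2 := by
          rw [Finset.sum_pair hadj.ne]; ring
      _ ≤ ∑ k ∈ {i, j}, G.degree k * (y k - c) ^ 2 :=
          Finset.sum_le_sum fun k _ => mul_le_mul_of_nonneg_right (hdeg k) (sq_nonneg _)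
      _ ≤ _ := Finset.sum_le_sum_of_subset_of_nonneg (Finset.subset_univ _)
          fun k _ _ => by positivity
  have h2 := (mul_le_mul_of_nonneg_left h1 hlam.le).trans hc
  rw [le_div_iff₀ (by positivity)]
  by_contra! hlt
  have hpos : 0 < y i - y j := by
    by_contra! hneg
    nlinarith [mul_pos hd hlam]
  have h3 : (y i - y j) ^ 2 ≤ 2 * ((y i - c) ^ 2 + (y j - c) ^ 2) := by
    nlinarith [sq_nonneg (y i - c + (y j - c))]
  have h4 : lam * (d * (y i - y j) ^ 2) ≤ 2 * (y i - y j) := by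
    have := mul_le_mul_of_nonneg_left h3 (mul_pos hlam hd).le
    nlinarith
  nlinarith [mul_lt_mul_of_pos_right hlt hpos]

lemma posSemidef_exists_gram {A : Matrix (Fin n) (Fin n) ℝ} (hA : A.PosSemidef) :
    ∃ C : Matrix (Fin n) (Fin n) ℝ, A = Cᵀ * C := by
  open scoped MatrixOrder in
  obtain ⟨C, hC⟩ := CStarAlgebra.nonneg_iff_eq_star_mul_self.mp hA.nonneg
  exact ⟨C, hC⟩

/-- Whitening of the edge vectors: a family in isotropic-like position, with small norms, whose
random partial sums control the quadratic forms of random subgraphs. -/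
lemma exists_whitened_edgeVec (G : SimpleGraph (Fin n)) [DecidableRel G.Adj] {lam d : ℝ}
    (hn : 0 < n) (hlam : 0 < lam) (hd : 0 < d) (hdeg : ∀ i, d ≤ G.degree i)
    (hpoin : ∀ y : Fin n → ℝ, ∃ c, lam * ∑ i, G.degree i * (y i - c) ^ 2 ≤
      y ⬝ᵥ (G.lapMatrix ℝ *ᵥ y)) :
    ∃ v : {e : Sym2 (Fin n) // e ∈ G.edgeFinset} → Fin n → ℝ,
      (∀ e, v e ⬝ᵥ v e ≤ 2 / (d * lam)) ∧
      (∀ z, ∑ e, (v e ⬝ᵥ z) ^ 2 ≤ z ⬝ᵥ z) ∧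
      ∀ x : Fin n → ℝ, (¬ ∃ c, ∀ i, x i = c) → ∃ z, z ≠ 0 ∧ (∀ e, v e ⬝ᵥ z = edgeVec e.1 ⬝ᵥ x) ∧
        z ⬝ᵥ z = ∑ e : {e : Sym2 (Fin n) // e ∈ G.edgeFinset}, (edgeVec e.1 ⬝ᵥ x) ^ 2 := by
  have hn' : (n : ℝ) ≠ 0 := by exact_mod_cast hn.ne'
  set L := G.lapMatrix ℝ with hL
  set Q : Matrix (Fin n) (Fin n) ℝ := L + vecMulVec 1 1 with hQ
  have hLq : ∀ x, 0 ≤ x ⬝ᵥ (L *ᵥ x) := fun x => by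
    rw [hL, lapMatrix_quadForm]
    positivity
  have hQv : ∀ x, Q *ᵥ x = L *ᵥ x + fun _ => ∑ i, x i := fun x => by
    rw [hQ, add_mulVec, vecMulVec_mulVec]
    ext i
    simp [dotProduct]
  have hQq : ∀ x, x ⬝ᵥ (Q *ᵥ x) = x ⬝ᵥ (L *ᵥ x) + (∑ i, x i) ^ 2 := fun x => by
    rw [hQv, dotProduct_add, sq]
    simp [dotProduct, Finset.sum_mul]
  have hconst : ∀ x, x ⬝ᵥ (L *ᵥ x) ≤ 0 → ∃ c, ∀ i, x i = c := by
    intro x hx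
    obtain ⟨c, hc⟩ := hpoin x
    have h0 : ∑ i, G.degree i * (x i - c) ^ 2 ≤ 0 := by
      by_contra! h
      linarith [mul_pos hlam h]
    refine ⟨c, fun i => ?_⟩
    have h1 := (Finset.sum_eq_zero_iff_of_nonneg (fun i _ => by positivity)).1
      (le_antisymm h0 (Finset.sum_nonneg fun i _ => by positivity)) i (Finset.mem_univ i)
    have h2 : (G.degree i : ℝ) ≠ 0 := (hd.trans_le (hdeg i)).ne'
    simpa [h2, sub_eq_zero] using h1
  have hPD : Q.PosDef := by
    refine .of_dotProduct_mulVec_pos ?_ fun x hx => ?_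
    · refine (isHermitian_lapMatrix ℝ G).add ?_
      simpa using (posSemidef_vecMulVec_self_star (1 : Fin n → ℝ)).1
    · rw [star_trivial, hQq]
      by_contra! h
      obtain ⟨c, hc⟩ := hconst x (by nlinarith [sq_nonneg (∑ i, x i)])
      have h1 : (∑ i, x i) ^ 2 ≤ 0 := by linarith [hLq x]
      have h2 : ∑ i, x i = 0 := by nlinarith
      simp only [hc, Finset.sum_const, Finset.card_univ, Fintype.card_fin, nsmul_eq_mul,
        mul_eq_zero, hn', false_or] at h2
      exact hx (funext fun i => by rw [hc, h2]; rfl)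
  obtain ⟨C, hC⟩ := posSemidef_exists_gram hPD.posSemidef
  have hdet : IsUnit C.det := by
    have h1 := hPD.det_pos.ne'
    rw [hC, det_mul] at h1
    exact isUnit_iff_ne_zero.2 (right_ne_zero_of_mul h1)
  have hCD : C * C⁻¹ = 1 := mul_nonsing_inv C hdet
  have hDC : C⁻¹ * C = 1 := nonsing_inv_mul C hdet
  have hCq : ∀ x, (C *ᵥ x) ⬝ᵥ (C *ᵥ x) = x ⬝ᵥ (Q *ᵥ x) := fun x => by
    rw [hC, ← mulVec_mulVec, dotProduct_mulVec x, vecMul_transpose]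
  have hvz : ∀ (b z : Fin n → ℝ), (C⁻¹ᵀ *ᵥ b) ⬝ᵥ z = b ⬝ᵥ (C⁻¹ *ᵥ z) := fun b z => by
    rw [mulVec_transpose, dotProduct_mulVec]
  have hsum : ∀ x : Fin n → ℝ, ∑ e : {e : Sym2 (Fin n) // e ∈ G.edgeFinset},
      (edgeVec e.1 ⬝ᵥ x) ^ 2 = x ⬝ᵥ (L *ᵥ x) := fun x => by
    rw [hL, lapMatrix_quadForm]
    exact Finset.sum_coe_sort G.edgeFinset fun e => (edgeVec e ⬝ᵥ x) ^ 2
  refine ⟨fun e => C⁻¹ᵀ *ᵥ edgeVec e.1, fun e => ?_, fun z => ?_, fun x hx => ?_⟩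
  · rw [hvz]
    refine effectiveResistance_le G hlam hd hdeg hpoin e.2 ?_
    set y := C⁻¹ *ᵥ (C⁻¹ᵀ *ᵥ edgeVec e.1) with hy
    have hQy : Q *ᵥ y = edgeVec e.1 := by
      rw [hy, hC, mulVec_mulVec, mulVec_mulVec]
      have : Cᵀ * C * C⁻¹ * C⁻¹ᵀ = 1 := by
        rw [mul_assoc Cᵀ, hCD, mul_one, ← transpose_mul, hDC, transpose_one]
      rw [this, one_mulVec]
    have hsum0 : ∑ i, y i = 0 := by
      have h1 : (1 : Fin n → ℝ) ⬝ᵥ (Q *ᵥ y) = 0 := by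
        rw [hQy, dotProduct_comm, edgeVec_dotProduct]
        simp
      have h2 : (1 : Fin n → ℝ) ⬝ᵥ (L *ᵥ y) = 0 := by
        rw [dotProduct_mulVec, ← mulVec_transpose, hL, (isSymm_lapMatrix ℝ G).eq]
        have := lapMatrix_mulVec_const_eq_zero (R := ℝ) G
        rw [show (1 : Fin n → ℝ) = fun _ => 1 from rfl, this, zero_dotProduct]
      rw [hQv, dotProduct_add, h2] at h1
      simpa [dotProduct, hn'] using h1
    rw [hQv, hsum0] at hQy
    rw [← hQy]
    ext i
    simp [hL]
  · simp only [hvz]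
    rw [hsum]
    calc (C⁻¹ *ᵥ z) ⬝ᵥ (L *ᵥ (C⁻¹ *ᵥ z)) ≤ (C⁻¹ *ᵥ z) ⬝ᵥ (Q *ᵥ (C⁻¹ *ᵥ z)) := by
          rw [hQq]
          linarith [sq_nonneg (∑ i, (C⁻¹ *ᵥ z) i)]
      _ = z ⬝ᵥ z := by rw [← hCq, mulVec_mulVec, hCD, one_mulVec]
  · set m := (∑ i, x i) / n with hm
    set x' : Fin n → ℝ := fun i => x i - m with hx'
    have hx'sum : ∑ i, x' i = 0 := by
      simp only [hx', Finset.sum_sub_distrib, Finset.sum_const, Finset.card_univ,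
        Fintype.card_fin, nsmul_eq_mul, hm]
      field_simp
      ring
    have hedge : ∀ e, edgeVec e ⬝ᵥ x' = edgeVec e ⬝ᵥ x := fun e => by
      simp [edgeVec_dotProduct, hx']
    have hinv : C⁻¹ *ᵥ (C *ᵥ x') = x' := by rw [mulVec_mulVec, hDC, one_mulVec]
    refine ⟨C *ᵥ x', fun h => hx ⟨m, fun i => ?_⟩, fun e => ?_, ?_⟩
    · rw [h, mulVec_zero] at hinv
      have := congrFun hinv i
      simp only [hx', Pi.zero_apply] at this
      linarith
    · rw [hvz, hinv, hedge]
    · rw [hCq, hQq, hx'sum, ← hsum]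
      simp [hedge]

end Laplacian

section Certificate

variable {n : ℕ}

lemma one_sub_entrySym_gram {X Y : Matrix (Fin n) (Fin n) ℝ} (hXY : X = Yᵀ * Y)
    (hdiag : ∀ i, X i i = 1) (e : Sym2 (Fin n)) :
    1 - entrySym X e = (∑ k, (edgeVec e ⬝ᵥ Y k) ^ 2) / 2 := by
  have hX : ∀ i j, X i j = ∑ k, Y k i * Y k j := fun i j => by simp [hXY, mul_apply]
  set i := (Quot.out e).1 with hi
  set j := (Quot.out e).2 with hj
  have he : entrySym X e = (X i j + X j i) / 2 := by
    conv_lhs => rw [← sym2_mk_out e]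
    rfl
  have hsum : ∑ k, (edgeVec e ⬝ᵥ Y k) ^ 2 = X i i + X j j - X i j - X j i := by
    simp only [hX, ← Finset.sum_add_distrib, ← Finset.sum_sub_distrib]
    refine Finset.sum_congr rfl fun k _ => ?_
    rw [edgeVec_dotProduct]
    ring
  rw [he, hsum, hdiag, hdiag]
  ring

/-- Strict positivity of the signed Laplacian off the constants certifies that the all-ones
matrix is the unique optimum of the semidefinite program. -/
lemma sdp_unique_optimum (G : SimpleGraph (Fin n)) [DecidableRel G.Adj]
    (f : {e : Sym2 (Fin n) // e ∈ G.edgeFinset} → Bool)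
    (hpos : ∀ x : Fin n → ℝ, (¬ ∃ c, ∀ i, x i = c) →
      0 < ∑ e, (if f e then (-1 : ℝ) else 1) * (edgeVec e.1 ⬝ᵥ x) ^ 2)
    (X : Matrix (Fin n) (Fin n) ℝ) (hX : X.PosSemidef) (hdiag : ∀ i, X i i = 1) :
    (∑ e ∈ G.edgeFinset.attach, (if f e then (-1 : ℝ) else 1) * entrySym X e.1) ≤
        (G.edgeFinset.card : ℝ) -
          2 * ((G.edgeFinset.attach.filter fun e => f e = true).card : ℝ) ∧
      ((∑ e ∈ G.edgeFinset.attach, (if f e then (-1 : ℝ) else 1) * entrySym X e.1) =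
        (G.edgeFinset.card : ℝ) -
          2 * ((G.edgeFinset.attach.filter fun e => f e = true).card : ℝ) ↔
        X = Matrix.of fun _ _ => (1 : ℝ)) := by
  have hcard : (G.edgeFinset.card : ℝ) -
      2 * ((G.edgeFinset.attach.filter fun e => f e = true).card : ℝ) =
      ∑ e ∈ G.edgeFinset.attach, (if f e then (-1 : ℝ) else 1) := by
    rw [← Finset.card_attach, Finset.card_eq_sum_ones, Finset.card_filter]
    push_cast
    rw [Finset.mul_sum, ← Finset.sum_sub_distrib]
    refine Finset.sum_congr rfl fun e _ => ?_
    split_ifs <;> norm_num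
  obtain ⟨Y, hY⟩ := posSemidef_exists_gram hX
  set q : (Fin n → ℝ) → ℝ := fun x =>
    ∑ e, (if f e then (-1 : ℝ) else 1) * (edgeVec e.1 ⬝ᵥ x) ^ 2 with hq
  have hgap : (∑ e ∈ G.edgeFinset.attach, (if f e then (-1 : ℝ) else 1)) -
      ∑ e ∈ G.edgeFinset.attach, (if f e then (-1 : ℝ) else 1) * entrySym X e.1 =
      (∑ k, q (Y k)) / 2 := by
    rw [← Finset.sum_sub_distrib, hq, Finset.sum_comm, Finset.sum_div]
    refine Finset.sum_congr rfl fun e _ => ?_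
    rw [← Finset.mul_sum, mul_div_assoc, ← one_sub_entrySym_gram hY hdiag]
    ring
  have hq0 : ∀ k, 0 ≤ q (Y k) := by
    intro k
    by_cases hc : ∃ c, ∀ i, Y k i = c
    · obtain ⟨c, hc⟩ := hc
      simp [hq, edgeVec_dotProduct, hc]
    · exact (hpos _ hc).le
  have hsum0 : 0 ≤ ∑ k, q (Y k) := Finset.sum_nonneg fun k _ => hq0 k
  rw [hcard]
  refine ⟨by linarith, fun heq => ?_, fun heq => ?_⟩
  · have hz : ∑ k, q (Y k) = 0 := by linarith
    have hconst : ∀ k, ∃ c, ∀ i, Y k i = c := by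
      intro k
      by_contra hc
      have := (Finset.sum_eq_zero_iff_of_nonneg fun k _ => hq0 k).1 hz k (Finset.mem_univ k)
      exact (hpos _ hc).ne' this
    ext i j
    rw [Matrix.of_apply, ← hdiag i, hY]
    simp only [mul_apply, transpose_apply]
    refine Finset.sum_congr rfl fun k _ => ?_
    obtain ⟨c, hc⟩ := hconst k
    rw [hc, hc]
  · refine Finset.sum_congr rfl fun e _ => ?_
    have : entrySym X e.1 = 1 := by
      rw [heq]
      conv_lhs => rw [← sym2_mk_out e.1]
      simp [entrySym]
    rw [this, mul_one]

lemma signed_sum_pos_of_lt {κ : Type*} [Fintype κ] (f : κ → Bool) (g : κ → ℝ) {c : ℝ}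
    (hc : c < 1 / 2) (hg : ∀ e, 0 ≤ g e) (h : ∑ e with f e = true, g e < c * ∑ e, g e) :
    0 < ∑ e, (if f e then (-1 : ℝ) else 1) * g e := by
  have h1 : ∑ e, (if f e then (-1 : ℝ) else 1) * g e =
      ∑ e, g e - 2 * ∑ e with f e = true, g e := by
    rw [Finset.sum_filter, Finset.mul_sum, ← Finset.sum_sub_distrib]
    refine Finset.sum_congr rfl fun e _ => ?_
    split_ifs <;> ring
  have h2 : 0 ≤ ∑ e, g e := Finset.sum_nonneg fun e _ => hg e
  rw [h1]
  nlinarith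

lemma sum_prod_bernoulli {κ : Type*} [Fintype κ] [DecidableEq κ] (p : ℝ) :
    ∑ f : κ → Bool, ∏ e, (if f e then p else 1 - p) = 1 := by
  rw [← Fintype.prod_sum fun (_ : κ) (b : Bool) => if b then p else 1 - p]
  simp

end Certificate

theorem stmt_14 {n : ℕ} (hn : 2 ≤ n) (G : SimpleGraph (Fin n)) [DecidableRel G.Adj]
    (hconn : G.Connected)
    (dmin : ℕ) (hdmin : IsLeast (Set.range fun i => G.degree i) dmin) (hdmin1 : 1 ≤ dmin)
    -- `lam` is the second-smallest eigenvalue of the normalized Laplacian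
    -- `D_G^{−1/2} L_G D_G^{−1/2}`: the minimum Rayleigh quotient over unit vectors
    -- orthogonal to `D_G^{1/2}·1`, the eigenvector of the smallest eigenvalue `0`.
    (lam : ℝ)
    (hlam : IsLeast {r : ℝ | ∃ z : Fin n → ℝ,
        (∑ i, z i * Real.sqrt (G.degree i)) = 0 ∧ (∑ i, (z i) ^ 2) = 1 ∧
        r = z ⬝ᵥ ((Matrix.of fun i j =>
          (G.lapMatrix ℝ) i j / (Real.sqrt (G.degree i) * Real.sqrt (G.degree j))) *ᵥ z)} lam)
    (η : ℝ) (hη : η ∈ Set.Ioo (0 : ℝ) (1 / 2))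
    (hgap : (dmin : ℝ) * lam > (18 / η) * Real.log n)
    (δ : ℝ) (hδ : δ = Real.sqrt (18 * Real.log n / (η * dmin * lam)))
    (hsmall : η * (1 + δ) < 1 / 2) :
    -- with probability ≥ 1 − 1/n² over the random subgraph `H` (each edge of `G` kept
    -- independently with probability `η`; `f e = true` means `e ∈ E_H`, i.e. `b_e = −1`),
    -- the SDP attains its maximum `|E_G| − 2|E_H|` uniquely at the all-ones matrix
    1 - 1 / (n : ℝ) ^ 2 ≤
      ∑ f : {e : Sym2 (Fin n) // e ∈ G.edgeFinset} → Bool,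
        if (∀ X : Matrix (Fin n) (Fin n) ℝ, X.PosSemidef → (∀ i, X i i = 1) →
            (∑ e ∈ G.edgeFinset.attach, (if f e then (-1 : ℝ) else 1) * entrySym X e.1) ≤
              (G.edgeFinset.card : ℝ) -
                2 * ((G.edgeFinset.attach.filter fun e => f e = true).card : ℝ) ∧
            ((∑ e ∈ G.edgeFinset.attach, (if f e then (-1 : ℝ) else 1) * entrySym X e.1) =
              (G.edgeFinset.card : ℝ) -
                2 * ((G.edgeFinset.attach.filter fun e => f e = true).card : ℝ) ↔
              X = Matrix.of fun _ _ => (1 : ℝ)))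
        then ∏ e : {e : Sym2 (Fin n) // e ∈ G.edgeFinset}, (if f e then η else 1 - η)
        else 0 := by
  obtain ⟨hη0, hη1⟩ := hη
  have hn1 : (1 : ℝ) < n := by exact_mod_cast hn
  have hlog : 0 < Real.log n := Real.log_pos hn1
  have hdpos : (0 : ℝ) < dmin := by exact_mod_cast hdmin1
  have hprod : 0 < (dmin : ℝ) * lam := lt_trans (by positivity) hgap
  have hlam0 : 0 < lam := pos_of_mul_pos_right hprod hdpos.le
  have hdeg : ∀ i, dmin ≤ G.degree i := fun i => hdmin.2 ⟨i, rfl⟩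
  have hδ0 : 0 ≤ δ := hδ ▸ Real.sqrt_nonneg _
  have hδsq : δ ^ 2 = 18 * Real.log n / (η * dmin * lam) := by
    rw [hδ, Real.sq_sqrt (by positivity)]
  have hδ1 : δ ≤ 1 := by
    have h1 : δ ^ 2 ≤ 1 := by
      rw [hδsq, div_le_one (by positivity), mul_assoc η]
      have := mul_lt_mul_of_pos_left hgap hη0
      rw [← mul_assoc, mul_div_cancel₀ _ hη0.ne'] at this
      exact this.le
    nlinarith
  obtain ⟨v, hv, hle, hwhite⟩ := exists_whitened_edgeVec G (by omega) hlam0 hdpos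
    (fun i => by exact_mod_cast hdeg i)
    (normalizedLaplacian_poincare G (fun i => hdmin1.trans (hdeg i)) (by omega) hlam.2)
  have hchernoff := matrix_chernoff_bernoulli_rankOne v hv (by positivity) hη0.le (by linarith)
    hδ0 hδ1 hle
  have hbound : (Fintype.card (Fin n) : ℝ) *
      Real.exp (-(η * δ ^ 2 / (3 * (2 / (dmin * lam))))) = 1 / (n : ℝ) ^ 2 := by
    have h1 : -(η * δ ^ 2 / (3 * (2 / (dmin * lam)))) = -(3 * Real.log n) := by
      rw [hδsq]
      field_simp
      norm_num
    have h2 : Real.exp (3 * Real.log n) = (n : ℝ) ^ 3 := by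
      rw [mul_comm, Real.exp_mul, Real.exp_log (by linarith)]
      norm_cast
    rw [h1, Real.exp_neg, h2, Fintype.card_fin]
    field_simp
  rw [hbound] at hchernoff
  refine (sub_le_sub_left hchernoff 1).trans ?_
  rw [sub_le_iff_le_add, ← Finset.sum_add_distrib]
  refine (sum_prod_bernoulli (κ := {e : Sym2 (Fin n) // e ∈ G.edgeFinset}) η).symm.le.trans
    (Finset.sum_le_sum fun f _ => ?_)
  have hw0 : 0 ≤ ∏ e : {e : Sym2 (Fin n) // e ∈ G.edgeFinset}, (if f e then η else 1 - η) :=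
    Finset.prod_nonneg fun e _ => by split_ifs <;> linarith
  by_cases hbad : ∃ z : Fin n → ℝ, z ≠ 0 ∧
      η * (1 + δ) * (z ⬝ᵥ z) ≤ ∑ e with f e = true, (v e ⬝ᵥ z) ^ 2
  · rw [if_pos hbad]
    refine le_add_of_nonneg_left ?_
    split_ifs
    exacts [hw0, le_rfl]
  · rw [if_neg hbad, add_zero, if_pos]
    refine sdp_unique_optimum G f fun x hx => ?_
    obtain ⟨z, hz, hvz, hzz⟩ := hwhite x hx
    refine signed_sum_pos_of_lt f _ hsmall (fun e => sq_nonneg _) ?_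
    push Not at hbad
    simpa only [hvz, hzz] using hbad z hz
end

section
/- Let n ≥ 4 be even and k ≥ 1, and let G be the graph on vertex set V = (ℤ/nℤ) × {1,…,k} in which (u,i) and (v,j) are adjacent if and only if v = u+1 or v = u−1 (mod n), together with one additional edge e* joining (0,1) and (n/2,1). For w ∈ ℤ/nℤ define x_w ∈ ℝ^V by x_w(u,i) = dist(u,w), the graph distance between u and w in the n-cycle, and let X = Σ_{w∈ℤ/nℤ} x_w x_wᵀ. Then: (a) X is positive semidefinite and all its diagonal entries are equal (to Σ_{v=0}^{n−1} min(v, n−v)²); (b) ⟨X, L_{G∖e*}⟩ = n²k², where G∖e* is G with the edge e* removed; (c) ⟨X, L_{e*}⟩ ≥ n³/24; consequently, if n > 24k², then ⟨X, L_{e*}⟩ > (1/2)·⟨X, L_G⟩, so the single-edge subgraph {e*} violates the relative SDP approximation ⟨X, L_H⟩ < (1/2)⟨X, L_G⟩ at this X. -/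
open Finset Matrix

/-- The Laplacian of the single edge `{a,b}`: `(χ_a − χ_b)(χ_a − χ_b)ᵀ`. -/
noncomputable def edgeLapV {V : Type} [DecidableEq V] (a b : V) : Matrix V V ℝ :=
  Matrix.of fun i j =>
    ((if i = a then (1 : ℝ) else 0) - (if i = b then 1 else 0)) *
      ((if j = a then (1 : ℝ) else 0) - (if j = b then 1 else 0))

/-- The graph distance between `u` and `w` in the `n`-cycle:
`min((u−w) mod n, (w−u) mod n)`. -/
def cycleDist {n : ℕ} [NeZero n] (u w : ZMod n) : ℕ := min (u - w).val (w - u).val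

theorem trace_transpose_mul_edgeLapV {V : Type} [Fintype V] [DecidableEq V]
    (X : Matrix V V ℝ) (a b : V) :
    (Xᵀ * edgeLapV a b).trace = X a a - X a b - X b a + X b b := by
  simp only [Matrix.trace, Matrix.diag, Matrix.mul_apply, Matrix.transpose_apply, edgeLapV,
    Matrix.of_apply, mul_sub, Finset.sum_sub_distrib, mul_ite, mul_one,
    mul_zero, Finset.sum_ite_eq', Finset.sum_ite_irrel, Finset.sum_const_zero,
    Finset.mem_univ, if_true]
  ring

theorem trace_transpose_sum_vecMulVec_mul_edgeLapV {V ι : Type} [Fintype V] [DecidableEq V]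
    [Fintype ι] (x : ι → V → ℝ) (a b : V) :
    ((∑ w, Matrix.vecMulVec (x w) (x w))ᵀ * edgeLapV a b).trace = ∑ w, (x w a - x w b) ^ 2 := by
  simp only [trace_transpose_mul_edgeLapV, Matrix.sum_apply, Matrix.vecMulVec_apply,
    ← Finset.sum_sub_distrib, ← Finset.sum_add_distrib]
  exact Finset.sum_congr rfl fun w _ => by ring

theorem cycleDist_eq_min_val {n : ℕ} [NeZero n] (u w : ZMod n) :
    cycleDist u w = min (u - w).val (n - (u - w).val) := by
  have h : (w - u).val = if u - w = 0 then 0 else n - (u - w).val := by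
    rw [← ZMod.neg_val, neg_sub]
  rw [cycleDist, h]
  split_ifs with h0 <;> simp [h0]

theorem sum_zmod_val {n : ℕ} [NeZero n] {M : Type*} [AddCommMonoid M] (g : ℕ → M) :
    ∑ z : ZMod n, g z.val = ∑ v ∈ Finset.range n, g v := by
  obtain ⟨m, rfl⟩ := Nat.exists_eq_succ_of_ne_zero (NeZero.ne n)
  exact Fin.sum_univ_eq_sum_range g (m + 1)

/-- On an even cycle, the distances from `w` to two adjacent vertices differ by exactly one. -/
theorem sq_cycleDist_sub_cycleDist_add_one {n : ℕ} [NeZero n] (hn : 2 ≤ n) (hneven : Even n)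
    (u w : ZMod n) : ((cycleDist u w : ℝ) - cycleDist (u + 1) w) ^ 2 = 1 := by
  have : Fact (1 < n) := ⟨hn⟩
  have hv : (u + 1 - w).val = ((u - w).val + 1) % n := by
    rw [add_sub_right_comm, ZMod.val_add, ZMod.val_one]
  have hlt := ZMod.val_lt (u - w)
  obtain ⟨m, hm⟩ := hneven
  have h : cycleDist u w = cycleDist (u + 1) w + 1 ∨ cycleDist (u + 1) w = cycleDist u w + 1 := by
    rw [cycleDist_eq_min_val, cycleDist_eq_min_val, hv]
    generalize (u - w).val = v at hlt ⊢
    rcases Nat.lt_or_ge (v + 1) n with h1 | h1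
    · rw [Nat.mod_eq_of_lt h1]; omega
    · rw [show v + 1 = n by omega, Nat.mod_self]; omega
  rcases h with h | h <;> rw [h] <;> push_cast <;> ring

theorem cycleDist_comm {n : ℕ} [NeZero n] (u w : ZMod n) : cycleDist u w = cycleDist w u :=
  min_comm _ _

theorem sum_range_sq_sub_two_mul (a : ℝ) (m : ℕ) :
    ∑ t ∈ Finset.range m, (a - 2 * t) ^ 2 =
      m * a ^ 2 - 2 * a * m * (m - 1) + 2 * m * (m - 1) * (2 * m - 1) / 3 := by
  induction m with
  | zero => simp
  | succ m ih => rw [Finset.sum_range_succ, ih]; push_cast; ring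

theorem sum_sq_cycleDist_antipodal {n : ℕ} [NeZero n] (hneven : Even n) :
    ∑ w : ZMod n, ((cycleDist 0 w : ℝ) - cycleDist ((n / 2 : ℕ) : ZMod n) w) ^ 2 =
      (n : ℝ) ^ 3 / 12 + 2 * n / 3 := by
  obtain ⟨m, hm⟩ := hneven
  have hpos := NeZero.pos n
  have hhalf : n / 2 = m := by omega
  have hterm (w : ZMod n) : ((cycleDist 0 w : ℝ) - cycleDist ((n / 2 : ℕ) : ZMod n) w) ^ 2 =
      ((m : ℝ) - 2 * (min w.val (n - w.val) : ℕ)) ^ 2 := by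
    have hneg : ((n / 2 : ℕ) : ZMod n) = -((n / 2 : ℕ) : ZMod n) := by
      rw [eq_neg_iff_add_eq_zero, ← Nat.cast_add, hhalf, ← hm, ZMod.natCast_self]
    have hv : (w - ((n / 2 : ℕ) : ZMod n)).val = (w.val + m) % n := by
      rw [sub_eq_add_neg, ← hneg, ZMod.val_add, ZMod.val_natCast, hhalf,
        Nat.mod_eq_of_lt (show m < n by omega)]
    have hlt := ZMod.val_lt w
    have h : cycleDist ((n / 2 : ℕ) : ZMod n) w + min w.val (n - w.val) = m := by
      rw [cycleDist_comm, cycleDist_eq_min_val, hv]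
      generalize w.val = v at hlt ⊢
      rcases Nat.lt_or_ge (v + m) n with h1 | h1
      · rw [Nat.mod_eq_of_lt h1]; omega
      · rw [Nat.mod_eq_sub_mod h1, Nat.mod_eq_of_lt (by omega)]; omega
    rw [cycleDist_comm 0 w, cycleDist_eq_min_val w 0, sub_zero]
    have h' := congrArg (Nat.cast (R := ℝ)) h
    push_cast at h' ⊢
    rw [← h']
    ring
  rw [Finset.sum_congr rfl fun w _ => hterm w,
    sum_zmod_val fun v => ((m : ℝ) - 2 * (min v (n - v) : ℕ)) ^ 2]
  have hlow : ∑ t ∈ Finset.range m, ((m : ℝ) - 2 * (min t (n - t) : ℕ)) ^ 2 =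
      ∑ t ∈ Finset.range m, ((m : ℝ) - 2 * t) ^ 2 :=
    Finset.sum_congr rfl fun t ht => by
      rw [show min t (n - t) = t by have := Finset.mem_range.1 ht; omega]
  have hhigh : ∑ t ∈ Finset.range m, ((m : ℝ) - 2 * (min (m + t) (n - (m + t)) : ℕ)) ^ 2 =
      ∑ t ∈ Finset.range m, ((m : ℝ) - 2 * t) ^ 2 :=
    Finset.sum_congr rfl fun t ht => by
      have ht' := Finset.mem_range.1 ht
      rw [show min (m + t) (n - (m + t)) = m - t by omega, Nat.cast_sub ht'.le]
      ring
  have hsplit := Finset.sum_range_add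
    (fun v => ((m : ℝ) - 2 * (min v (n - v) : ℕ)) ^ 2) m m
  rw [← hm] at hsplit
  rw [hsplit, hlow, hhigh, sum_range_sq_sub_two_mul, hm]
  push_cast
  ring

theorem stmt_15 {n k : ℕ} [NeZero n] (hn : 4 ≤ n) (hneven : Even n) (hk : 1 ≤ k)
    -- the vectors `x_w(u,i) = dist(u,w)` and the matrix `X = Σ_w x_w x_wᵀ`
    (X : Matrix (ZMod n × Fin k) (ZMod n × Fin k) ℝ)
    (hX : X = ∑ w : ZMod n,
      Matrix.vecMulVec (fun p : ZMod n × Fin k => (cycleDist p.1 w : ℝ))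
        (fun p : ZMod n × Fin k => (cycleDist p.1 w : ℝ)))
    -- the Laplacian of the ring part `G ∖ e*`: vertices `(u,i)` and `(v,j)` are adjacent
    -- iff `v = u ± 1 (mod n)`; each such edge is enumerated once as `{(u,i),(u+1,j)}`
    (Lring : Matrix (ZMod n × Fin k) (ZMod n × Fin k) ℝ)
    (hLring : Lring = ∑ u : ZMod n, ∑ i : Fin k, ∑ j : Fin k,
      edgeLapV ((u, i) : ZMod n × Fin k) ((u + 1, j) : ZMod n × Fin k))
    -- the Laplacian of the special edge `e*` joining `(0,1)` and `(n/2,1)`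
    (Lstar : Matrix (ZMod n × Fin k) (ZMod n × Fin k) ℝ)
    (hLstar : Lstar = edgeLapV (((0 : ZMod n), ⟨0, hk⟩) : ZMod n × Fin k)
      ((((n / 2 : ℕ) : ZMod n), ⟨0, hk⟩) : ZMod n × Fin k)) :
    -- (a)
    (X.PosSemidef ∧
      ∀ p : ZMod n × Fin k, X p p = ∑ v ∈ Finset.range n, ((min v (n - v) : ℕ) : ℝ) ^ 2) ∧
    -- (b)
    (Xᵀ * Lring).trace = (n : ℝ) ^ 2 * (k : ℝ) ^ 2 ∧
    -- (c)
    ((n : ℝ) ^ 3 / 24 ≤ (Xᵀ * Lstar).trace ∧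
      (24 * (k : ℝ) ^ 2 < (n : ℝ) →
        (1 / 2) * (Xᵀ * (Lring + Lstar)).trace < (Xᵀ * Lstar).trace)) := by
  have hring : (Xᵀ * Lring).trace = (n : ℝ) ^ 2 * (k : ℝ) ^ 2 := by
    simp only [hLring, Matrix.mul_sum, Matrix.trace_sum, hX,
      trace_transpose_sum_vecMulVec_mul_edgeLapV,
      sq_cycleDist_sub_cycleDist_add_one (show 2 ≤ n by omega) hneven, Finset.sum_const,
      Finset.card_univ, ZMod.card, Fintype.card_fin, nsmul_eq_mul]
    ring
  have hstar : (Xᵀ * Lstar).trace = (n : ℝ) ^ 3 / 12 + 2 * n / 3 := by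
    rw [hLstar, hX, trace_transpose_sum_vecMulVec_mul_edgeLapV, sum_sq_cycleDist_antipodal hneven]
  have hn0 : (0 : ℝ) < n := Nat.cast_pos.2 (NeZero.pos n)
  refine ⟨⟨?_, fun p => ?_⟩, hring, ?_, fun h => ?_⟩
  · rw [hX]
    exact Matrix.posSemidef_sum _ fun w _ => by
      simpa using Matrix.posSemidef_vecMulVec_self_star
        (fun p : ZMod n × Fin k => (cycleDist p.1 w : ℝ))
  · simp only [hX, Matrix.sum_apply, Matrix.vecMulVec_apply, cycleDist_eq_min_val, ← pow_two]
    rw [← sum_zmod_val fun v => ((min v (n - v) : ℕ) : ℝ) ^ 2]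
    exact Equiv.sum_comp (Equiv.subLeft p.1)
      fun z : ZMod n => ((min z.val (n - z.val) : ℕ) : ℝ) ^ 2
  · rw [hstar]
    have := pow_pos hn0 3
    linarith
  · rw [Matrix.mul_add, Matrix.trace_add, hring, hstar]
    have := mul_lt_mul_of_pos_left h (pow_pos hn0 2)
    nlinarith [pow_pos hn0 3, mul_nonneg (sq_nonneg (n : ℝ)) (sq_nonneg (k : ℝ))]
end
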